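/- Let 0 < c < 1/2, let G be a d-regular simple graph on n vertices, and let X ≥ 0 be a real number such that every nonempty S ⊆ V with 2|S| ≤ n satisfies |δ(S)| ≥ X · |S| (i.e., the edge expansion of G is at least X). Then every separator (A, B, C) of G with separation constant c satisfies d · |C| ≥ c · X · n, i.e., |C| ≥ (c/d) · X · n. -/

import Mathlib

/-- The edge boundary `δ(S)` of a vertex set `S`: the set of edges of `G` with
exactly one endpoint in `S`. -/
noncomputable def edgeBoundary {V : Type*} [Fintype V] (G : SimpleGraph V)
    (S : Finset V) : Finset (Sym2 V) := by
  classical exact G.edgeFinset.filter (fun e => ∃ a ∈ S, ∃ b ∉ S, e = s(a, b))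

/-!
Every edge leaving `A` has its other endpoint in `C`, so `|δ(A)|` is at most the sum of the degrees
over `C`, hence at most `d |C|`. As `|A| ≤ |B|`, the set `A` contains at most half of the vertices,
so expansion gives `|δ(A)| ≥ X |A| ≥ c X n`.
-/

section EdgeBoundary

variable {V : Type*} [Fintype V] {G : SimpleGraph V} {S C : Finset V}

lemma mem_edgeBoundary {e : Sym2 V} :
    e ∈ edgeBoundary G S ↔ ∃ a ∈ S, ∃ b ∉ S, G.Adj a b ∧ e = s(a, b) := by
  simp only [edgeBoundary, Finset.mem_filter, SimpleGraph.mem_edgeFinset]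
  constructor
  · rintro ⟨hadj, a, ha, b, hb, rfl⟩
    exact ⟨a, ha, b, hb, hadj, rfl⟩
  · rintro ⟨a, ha, b, hb, hadj, rfl⟩
    exact ⟨hadj, a, ha, b, hb, rfl⟩

lemma edgeBoundary_subset_biUnion_incidenceFinset [DecidableEq V] [G.LocallyFinite]
    (hC : ∀ a ∈ S, ∀ b ∉ S, G.Adj a b → b ∈ C) :
    edgeBoundary G S ⊆ C.biUnion fun v => G.incidenceFinset v := by
  intro e he
  obtain ⟨a, ha, b, hb, hadj, rfl⟩ := mem_edgeBoundary.mp he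
  have hinc : s(a, b) ∈ G.incidenceFinset b :=
    (G.mem_incidenceFinset b _).mpr ⟨hadj, Sym2.mem_mk_right a b⟩
  exact Finset.mem_biUnion.mpr ⟨b, hC a ha b hb hadj, hinc⟩

lemma card_edgeBoundary_le_sum_degree [G.LocallyFinite]
    (hC : ∀ a ∈ S, ∀ b ∉ S, G.Adj a b → b ∈ C) :
    (edgeBoundary G S).card ≤ ∑ v ∈ C, G.degree v := by
  classical
  calc (edgeBoundary G S).card
      ≤ (C.biUnion fun v => G.incidenceFinset v).card :=
        Finset.card_le_card (edgeBoundary_subset_biUnion_incidenceFinset hC)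
    _ ≤ ∑ v ∈ C, (G.incidenceFinset v).card := Finset.card_biUnion_le
    _ = ∑ v ∈ C, G.degree v := by simp only [SimpleGraph.card_incidenceFinset_eq_degree]

lemma card_edgeBoundary_le_mul_card {d : ℕ} (hdeg : ∀ v ∈ C, Nat.card (G.neighborSet v) ≤ d)
    (hC : ∀ a ∈ S, ∀ b ∉ S, G.Adj a b → b ∈ C) :
    (edgeBoundary G S).card ≤ d * C.card := by
  classical
  have hdegree : ∀ v ∈ C, G.degree v ≤ d := fun v hv => by
    simpa only [Nat.card_eq_fintype_card, SimpleGraph.card_neighborSet_eq_degree] using hdeg v hv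
  calc (edgeBoundary G S).card
      ≤ ∑ v ∈ C, G.degree v := card_edgeBoundary_le_sum_degree hC
    _ ≤ C.card * d := Finset.sum_le_card_nsmul C _ d hdegree
    _ = d * C.card := mul_comm _ _

end EdgeBoundary

lemma mem_separator_of_adj {V : Type*} [Fintype V] [DecidableEq V] {G : SimpleGraph V}
    {A B C : Finset V} (hcover : A ∪ B ∪ C = Finset.univ)
    (hsep : ∀ a ∈ A, ∀ b ∈ B, ¬ G.Adj a b) {a b : V} (ha : a ∈ A) (hb : b ∉ A)
    (hadj : G.Adj a b) : b ∈ C := by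
  have hmem : b ∈ A ∪ B ∪ C := hcover ▸ Finset.mem_univ b
  have hbB : b ∉ B := fun hbB => hsep a ha b hbB hadj
  simpa only [Finset.mem_union, hb, hbB, false_or] using hmem

lemma two_mul_card_le_card_univ_of_disjoint {α : Type*} [Fintype α] {s t : Finset α}
    (hst : Disjoint s t) (hle : s.card ≤ t.card) : 2 * s.card ≤ Fintype.card α := by
  classical
  calc 2 * s.card ≤ s.card + t.card := by omega
    _ = (s ∪ t).card := (Finset.card_union_of_disjoint hst).symm
    _ ≤ Fintype.card α := Finset.card_le_univ _

theorem separator_card_ge_of_expansion_general {V : Type*} [Fintype V] [DecidableEq V]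
    (G : SimpleGraph V) (d : ℕ) (c X : ℝ) (hX : 0 ≤ X) (A B C : Finset V)
    (hdeg : ∀ v ∈ C, Nat.card (G.neighborSet v) ≤ d)
    (hexp : ∀ S : Finset V, S.Nonempty → 2 * S.card ≤ Fintype.card V →
      X * S.card ≤ ((edgeBoundary G S).card : ℝ))
    (hAB : Disjoint A B) (hcover : A ∪ B ∪ C = Finset.univ)
    (hA : c * Fintype.card V ≤ A.card) (hAleB : A.card ≤ B.card)
    (hsep : ∀ a ∈ A, ∀ b ∈ B, ¬ G.Adj a b) :
    c * X * Fintype.card V ≤ d * C.card := by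
  have hexpA : X * A.card ≤ (edgeBoundary G A).card := by
    rcases A.eq_empty_or_nonempty with rfl | hne
    · simp only [Finset.card_empty, Nat.cast_zero, mul_zero, Nat.cast_nonneg]
    · exact hexp A hne (two_mul_card_le_card_univ_of_disjoint hAB hAleB)
  have hboundary : (edgeBoundary G A).card ≤ d * C.card :=
    card_edgeBoundary_le_mul_card hdeg fun _ ha _ hb hadj =>
      mem_separator_of_adj hcover hsep ha hb hadj
  calc c * X * Fintype.card V = X * (c * Fintype.card V) := by ring
    _ ≤ X * A.card := mul_le_mul_of_nonneg_left hA hX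
    _ ≤ (edgeBoundary G A).card := hexpA
    _ ≤ d * C.card := mod_cast hboundary

/-- Let `0 < c < 1/2`, let `G` be a `d`-regular simple graph on `n`
vertices whose edge expansion is at least `X ≥ 0` (i.e. every nonempty `S` with
`2|S| ≤ n` satisfies `|δ(S)| ≥ X·|S|`). Then every separator `(A, B, C)` with
separation constant `c` satisfies `d·|C| ≥ c·X·n`. -/
theorem separator_card_ge_of_expansion {V : Type*} [Fintype V] [DecidableEq V]
    (G : SimpleGraph V) (d : ℕ) (c X : ℝ)
    (hc0 : 0 < c) (hc : c < 1 / 2) (hX : 0 ≤ X)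
    (hreg : ∀ v : V, Nat.card (G.neighborSet v) = d)
    (hexp : ∀ S : Finset V, S.Nonempty → 2 * S.card ≤ Fintype.card V →
      X * S.card ≤ ((edgeBoundary G S).card : ℝ))
    (A B C : Finset V)
    (hAB : Disjoint A B) (hAC : Disjoint A C) (hBC : Disjoint B C)
    (hcover : A ∪ B ∪ C = Finset.univ)
    (hA : c * Fintype.card V ≤ A.card) (hAleB : A.card ≤ B.card)
    (hsep : ∀ a ∈ A, ∀ b ∈ B, ¬ G.Adj a b) :
    c * X * Fintype.card V ≤ d * C.card := by
  exact separator_card_ge_of_expansion_general G d c X hX A B C (fun v _ => (hreg v).le) hexp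
    hAB hcover hA hAleB hsep
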